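/- Let N ≥ 2 and let e ∈ ℝ^N be the all-ones vector. Then 0 is a simple eigenvalue of S_N * T_N: the kernel of the linear map x ↦ (S_N * T_N) x is exactly the one-dimensional subspace of ℝ^N spanned by v₀ = T_N⁻¹ e. -/

import Mathlib

open Matrix

/-- The `N × N` tridiagonal matrix with `2` on the diagonal and `-1` on the
sub- and superdiagonals. -/
noncomputable def Tmat (N : ℕ) : Matrix (Fin N) (Fin N) ℝ :=
  Matrix.of fun i j =>
    if i = j then 2
    else if i.val + 1 = j.val ∨ j.val + 1 = i.val then -1 else 0

/-- The `N × N` matrix equal to `Tmat N` except that the `(1,1)` and `(N,N)` entries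
are `1` instead of `2`. -/
noncomputable def Smat (N : ℕ) : Matrix (Fin N) (Fin N) ℝ :=
  Matrix.of fun i j =>
    if i = j then (if i.val = 0 ∨ i.val = N - 1 then 1 else 2)
    else if i.val + 1 = j.val ∨ j.val + 1 = i.val then -1 else 0

lemma row_aux (N : ℕ) (c : ℝ) (x : Fin N → ℝ) (i : Fin N) :
    ∑ j : Fin N, (if i = j then c else if i.val + 1 = j.val ∨ j.val + 1 = i.val then -1 else 0) * x j
      = c * x i - (if h : i.val + 1 < N then x ⟨i.val + 1, h⟩ else 0)
        - (if 0 < i.val then x ⟨i.val - 1, by omega⟩ else 0) := by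
  have h1 : ∀ j : Fin N, (if i = j then c else if i.val + 1 = j.val ∨ j.val + 1 = i.val then -1 else 0) * x j
      = (if i = j then c * x j else 0) - (if i.val + 1 = j.val then x j else 0)
        - (if j.val + 1 = i.val then x j else 0) := by
    intro j
    by_cases a : i = j
    · subst a; simp
    · by_cases b : i.val + 1 = j.val
      · have : ¬ (j.val + 1 = i.val) := by omega
        simp [a, b, this]
      · by_cases d : j.val + 1 = i.val <;> simp [a, b, d]
  rw [Finset.sum_congr rfl (fun j _ => h1 j), Finset.sum_sub_distrib, Finset.sum_sub_distrib]
  congr 1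
  · congr 1
    · simp
    · split_ifs with h
      · rw [Finset.sum_eq_single ⟨i.val + 1, h⟩]
        · simp
        · intro b _ hb
          rw [if_neg]
          intro h'; exact hb (Fin.ext h'.symm)
        · simp
      · apply Finset.sum_eq_zero
        intro j _
        rw [if_neg]; have := j.2; omega
  · split_ifs with h
    · rw [Finset.sum_eq_single ⟨i.val - 1, by omega⟩]
      · rw [if_pos]; simp only; omega
      · intro b _ hb
        rw [if_neg]
        intro h'; apply hb; apply Fin.ext; simp only; omega
      · simp
    · apply Finset.sum_eq_zero
      intro j _
      rw [if_neg]; omega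

lemma Smat_row (N : ℕ) (x : Fin N → ℝ) (i : Fin N) :
    (Smat N).mulVec x i
      = (if i.val = 0 ∨ i.val = N - 1 then 1 else 2) * x i
        - (if h : i.val + 1 < N then x ⟨i.val + 1, h⟩ else 0)
        - (if 0 < i.val then x ⟨i.val - 1, by omega⟩ else 0) := by
  rw [← row_aux]; rfl

lemma Tmat_row (N : ℕ) (x : Fin N → ℝ) (i : Fin N) :
    (Tmat N).mulVec x i
      = 2 * x i - (if h : i.val + 1 < N then x ⟨i.val + 1, h⟩ else 0)
        - (if 0 < i.val then x ⟨i.val - 1, by omega⟩ else 0) := by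
  rw [← row_aux]; rfl

lemma Tmat_inj (N : ℕ) (hN : 2 ≤ N) (x : Fin N → ℝ) (hx : (Tmat N).mulVec x = 0) : x = 0 := by
  have hr : ∀ i : Fin N, _ := fun i => (Tmat_row N x i).symm.trans (congrFun hx i)
  have key : ∀ k : ℕ, ∀ h : k < N, x ⟨k, h⟩ = (k + 1) * x ⟨0, by omega⟩ := by
    intro k
    induction k using Nat.strong_induction_on with
    | _ k ih =>
      intro h
      match k, ih, h with
      | 0, _, _ => simp
      | 1, _, h =>
        have := hr ⟨0, by omega⟩
        simp [h] at this
        push_cast; linarith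
      | k+2, ih, h =>
        have := hr ⟨k+1, by omega⟩
        simp [show k + 1 + 1 < N by omega] at this
        have a := ih k (by omega) (by omega)
        have b := ih (k+1) (by omega) (by omega)
        push_cast at *
        rw [a, b] at this
        linarith
  have hl := hr ⟨N - 1, by omega⟩
  simp [show ¬ (N - 1 + 1 < N) by omega, show 1 < N by omega] at hl
  rw [key (N-1) (by omega), key (N-1-1) (by omega)] at hl
  obtain ⟨m, rfl⟩ : ∃ m, N = m + 2 := ⟨N - 2, by omega⟩
  simp only [show m + 2 - 1 = m + 1 by omega, show m + 1 - 1 = m by omega] at hl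
  push_cast at hl
  have h0 : x ⟨0, by omega⟩ = 0 := by
    have : ((m:ℝ) + 3) * x ⟨0, by omega⟩ = 0 := by linarith
    rcases mul_eq_zero.1 this with h | h
    · have : (0:ℝ) ≤ m := Nat.cast_nonneg m
      linarith
    · exact h
  ext i
  have := key i.val i.2
  rw [h0] at this
  simpa using this

lemma Smat_ker (N : ℕ) (hN : 2 ≤ N) (x : Fin N → ℝ) (hx : (Smat N).mulVec x = 0) :
    x = fun _ => x ⟨0, by omega⟩ := by
  have hr : ∀ i : Fin N, _ := fun i => (Smat_row N x i).symm.trans (congrFun hx i)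
  have key : ∀ k : ℕ, ∀ h : k < N, x ⟨k, h⟩ = x ⟨0, by omega⟩ := by
    intro k
    induction k using Nat.strong_induction_on with
    | _ k ih =>
      intro h
      match k, ih, h with
      | 0, _, _ => simp
      | 1, _, h =>
        have := hr ⟨0, by omega⟩
        simp [h] at this
        linarith
      | k+2, ih, h =>
        have := hr ⟨k+1, by omega⟩
        simp [show k + 1 + 1 < N by omega, show ¬ (k + 1 = N - 1) by omega] at this
        have a := ih k (by omega) (by omega)
        have b := ih (k+1) (by omega) (by omega)
        rw [a, b] at this
        linarith
  ext i
  exact key i.val i.2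

lemma Smat_one (N : ℕ) (hN : 2 ≤ N) : (Smat N).mulVec (fun _ => (1:ℝ)) = 0 := by
  ext i
  rw [Smat_row]
  have := i.2
  by_cases a : i.val = 0
  · simp [a, show 1 < N by omega]
  · by_cases b : i.val = N - 1
    · simp [b, show ¬ (N - 1 + 1 < N) by omega, show 1 < N by omega]
    · simp [a, b, show i.val + 1 < N by omega, show 0 < i.val by omega]
      norm_num

/-- `0` is a simple eigenvalue of `S_N * T_N`: the kernel of `x ↦ (S_N T_N) x` is
exactly the span of `v₀ = T_N⁻¹ e`. -/
theorem SmatTmat_ker_simple (N : ℕ) (hN : 2 ≤ N) :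
    LinearMap.ker (Smat N * Tmat N).mulVecLin =
      Submodule.span ℝ {(Tmat N)⁻¹.mulVec (fun _ => (1 : ℝ))} := by
  have hu : IsUnit (Tmat N) := by
    rw [← Matrix.mulVec_injective_iff_isUnit]
    intro a b hab
    have := Tmat_inj N hN (a - b) (by rw [Matrix.mulVec_sub]; exact sub_eq_zero.2 hab)
    exact sub_eq_zero.1 this
  have hd : IsUnit (Tmat N).det := (Matrix.isUnit_iff_isUnit_det _).1 hu
  ext x
  rw [LinearMap.mem_ker, Matrix.mulVecLin_apply, Submodule.mem_span_singleton, ← Matrix.mulVec_mulVec]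
  constructor
  · intro h
    have h2 := Smat_ker N hN _ h
    refine ⟨(Tmat N).mulVec x ⟨0, by omega⟩, ?_⟩
    rw [← Matrix.mulVec_smul]
    have : ((Tmat N).mulVec x ⟨0, by omega⟩) • (fun _ : Fin N => (1:ℝ)) = (Tmat N).mulVec x := by
      conv_rhs => rw [h2]
      ext i; simp
    rw [this, Matrix.mulVec_mulVec, Matrix.nonsing_inv_mul _ hd, Matrix.one_mulVec]
  · rintro ⟨a, rfl⟩
    rw [Matrix.mulVec_smul, Matrix.mulVec_mulVec, Matrix.mul_nonsing_inv _ hd, Matrix.one_mulVec,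
      Matrix.mulVec_smul, Smat_one N hN, smul_zero]
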